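/- Let d ≥ 1 and 0 < α < 1. Let k : ℝ^d ∖ {0} → ℝ be smooth away from the origin, positively homogeneous of degree −d, with zero mean on spheres centered at the origin. Fix indices i, j and set K(z) = z_j ∂_i k(z), which is smooth away from the origin and homogeneous of degree −d but need not have zero spherical means. Let χ : [0,∞) → [0,1] be smooth, equal to 1 on [0,1], and compactly supported. Then there is a constant C depending only on k, χ, α, d such that for every σ ∈ C^α(ℝ^d), the function I(x) = ∫_{ℝ^d} χ(|x−y|) K(x−y) (σ(y) − σ(x)) dy (an absolutely convergent integral) satisfies ‖I‖_{C^α(ℝ^d)} ≤ C ‖σ‖_{C^α(ℝ^d)}. -/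

import Mathlib

open MeasureTheory Real Set Filter Topology

noncomputable section

/-- `ℝ^d` (with the sup norm). -/
abbrev Euc (d : ℕ) : Type := Fin d → ℝ

/-- `d × d` real matrices (with the sup norm). -/
abbrev Mat (d : ℕ) : Type := Fin d → Fin d → ℝ

/-- `f` belongs to `C^α(ℝ^d)` with (both components of the) norm bounded by `M`. -/
def InCa {d : ℕ} {F : Type*} [NormedAddCommGroup F] (α M : ℝ) (f : Euc d → F) : Prop :=
  (∀ x, ‖f x‖ ≤ M) ∧ ∀ x y, ‖f x - f y‖ ≤ M * ‖x - y‖ ^ α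

/-- `f` belongs to `C^{α,p} = C^α(ℝ^d) ∩ L^p(ℝ^d)` with norm bounded by `M`. -/
def InCap {d : ℕ} {F : Type*} [NormedAddCommGroup F] (α p M : ℝ) (f : Euc d → F) : Prop :=
  InCa α M f ∧ eLpNorm f (ENNReal.ofReal p) volume ≤ ENNReal.ofReal M

/-- `f` belongs to `C^{1+α}(ℝ^d)` with norm bounded by `M`. -/
def InC1a {d : ℕ} {F : Type*} [NormedAddCommGroup F] [NormedSpace ℝ F] (α M : ℝ)
    (f : Euc d → F) : Prop :=
  Differentiable ℝ f ∧ (∀ x, ‖f x‖ ≤ M) ∧ InCa α M (fderiv ℝ f)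

/-- `f` belongs to `C^{1+α,p} = C^{1+α}(ℝ^d) ∩ W^{1,p}(ℝ^d)` with norm bounded by `M`. -/
def InC1ap {d : ℕ} {F : Type*} [NormedAddCommGroup F] [NormedSpace ℝ F] (α p M : ℝ)
    (f : Euc d → F) : Prop :=
  Differentiable ℝ f ∧ (∀ x, ‖f x‖ ≤ M) ∧ InCap α p M (fderiv ℝ f) ∧
    eLpNorm f (ENNReal.ofReal p) volume ≤ ENNReal.ofReal M

/-- The heat kernel `g_t`. -/
def heatKer (d : ℕ) (t : ℝ) (x : Euc d) : ℝ :=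
  (4 * π * t) ^ (-(d : ℝ) / 2) * Real.exp (-(∑ i, x i ^ 2) / (4 * t))

/-- Convolution with the heat kernel. -/
def heatConv {d : ℕ} {F : Type*} [NormedAddCommGroup F] [NormedSpace ℝ F] [CompleteSpace F]
    (t : ℝ) (f : Euc d → F) (x : Euc d) : F :=
  ∫ y : Euc d, heatKer d t (x - y) • f y

/-- `𝕃(f)(t) = e^{tΔ} f` (with `e^{0Δ} = Id`). -/
def opL {d : ℕ} {F : Type*} [NormedAddCommGroup F] [NormedSpace ℝ F] [CompleteSpace F]
    (f : Euc d → F) (t : ℝ) : Euc d → F :=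
  if t = 0 then f else heatConv t f

/-- The kernel of `e^{tΔ}ℍ`, `ℍ = I + R ⊗ R` the Leray projector: the inverse Fourier
transform of the (real, even, integrable for `t > 0`) symbol
`(δ_{mn} - ξ_mξ_n/|ξ|²) e^{-4π²t|ξ|²}`. -/
def lerayHeatKer (d : ℕ) (t : ℝ) (x : Euc d) (m n : Fin d) : ℝ :=
  ∫ ξ : Euc d, ((if m = n then (1 : ℝ) else 0) - ξ m * ξ n / (∑ i, ξ i ^ 2)) *
    Real.exp (-(4 * π ^ 2) * t * (∑ i, ξ i ^ 2)) * Real.cos (2 * π * ∑ i, x i * ξ i)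

/-- `div σ` for a matrix-valued field, `(div σ)_n = ∑_j ∂_j σ_{jn}`. -/
def divMat {d : ℕ} (σ : Euc d → Mat d) (y : Euc d) (n : Fin d) : ℝ :=
  ∑ j, fderiv ℝ (fun z => σ z j n) y (Pi.single j 1)

/-- `div u` for a vector field. -/
def divVec {d : ℕ} (u : Euc d → Euc d) (x : Euc d) : ℝ :=
  ∑ j, fderiv ℝ u x (Pi.single j 1) j

/-- `(∇u)_{mn} = ∂_n u_m`, as a matrix. -/
def gradMat {d : ℕ} (u : Euc d → Euc d) (x : Euc d) : Mat d :=
  fun m n => fderiv ℝ u x (Pi.single n 1) m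

/-- `𝕌(σ)(t) = ∫₀ᵗ e^{(t-s)Δ} ℍ div σ(s) ds`. -/
def opU {d : ℕ} (σ : ℝ → Euc d → Mat d) (t : ℝ) (x : Euc d) : Euc d := fun m =>
  ∫ s in (0 : ℝ)..t, ∫ y : Euc d, ∑ n, lerayHeatKer d (t - s) (x - y) m n * divMat (σ s) y n

/-- `𝔾(σ)(t) = ∫₀ᵗ e^{(t-s)Δ} ∇ℍ div σ(s) ds`. -/
def opG {d : ℕ} (σ : ℝ → Euc d → Mat d) (t : ℝ) (x : Euc d) : Mat d := fun m j =>
  ∫ s in (0 : ℝ)..t, ∫ y : Euc d, ∑ n,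
    fderiv ℝ (fun z => lerayHeatKer d (t - s) z m n) (x - y) (Pi.single j 1) * divMat (σ s) y n

/-- Sup norm functional. -/
def supN {X : Type*} {F : Type*} [NormedAddCommGroup F] (f : X → F) : ℝ := ⨆ x, ‖f x‖

/-- Hölder seminorm functional. -/
def holN {d : ℕ} {F : Type*} [NormedAddCommGroup F] (α : ℝ) (f : Euc d → F) : ℝ :=
  ⨆ q : Euc d × Euc d, ‖f q.1 - f q.2‖ / ‖q.1 - q.2‖ ^ α

/-- The `C^{α,p}` norm functional. -/
def capN {d : ℕ} {F : Type*} [NormedAddCommGroup F] (α p : ℝ) (f : Euc d → F) : ℝ :=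
  supN f + holN α f + (eLpNorm f (ENNReal.ofReal p) volume).toReal

/-- The `C^{1+α,p}` norm functional. -/
def c1apN {d : ℕ} {F : Type*} [NormedAddCommGroup F] [NormedSpace ℝ F] (α p : ℝ)
    (f : Euc d → F) : ℝ :=
  supN f + capN α p (fderiv ℝ f) + (eLpNorm f (ENNReal.ofReal p) volume).toReal

/-- `L^∞(0,T;Y)` norm of a path, w.r.t. a norm functional `N` on `Y`. -/
def linfN {Y : Type*} (T : ℝ) (N : Y → ℝ) (f : ℝ → Y) : ℝ :=
  ⨆ t : Icc (0 : ℝ) T, N (f (t : ℝ))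

/-- `C^β(0,T;Y)` norm of a path, w.r.t. a norm functional `N` on `Y`. -/
def cbN {Y : Type*} [Sub Y] (T β : ℝ) (N : Y → ℝ) (f : ℝ → Y) : ℝ :=
  linfN T N f +
    ⨆ q : Icc (0 : ℝ) T × Icc (0 : ℝ) T,
      N (f (q.1 : ℝ) - f (q.2 : ℝ)) / |(q.1 : ℝ) - (q.2 : ℝ)| ^ β

/-- The (classical, principal value) convolution operator with kernel `k`. -/
def pvConv {d : ℕ} {F : Type*} [NormedAddCommGroup F] [NormedSpace ℝ F] [CompleteSpace F]
    (k : Euc d → ℝ) (f : Euc d → F) (x : Euc d) : F :=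
  limUnder (𝓝[>] (0 : ℝ)) fun ε => ∫ y in {y : Euc d | ε < ‖x - y‖}, k (x - y) • f y

/-- The (notional) spatial inverse of a flow map. -/
def invX {d : ℕ} (X : ℝ → Euc d → Euc d) (s : ℝ) : Euc d → Euc d := Function.invFun (X s)

/-- The Lagrangian nonlinearity `𝒰(X,τ) = 𝕃(u₀)∘X + 𝕌(τ∘X⁻¹)∘X`. -/
def calU {d : ℕ} (u₀ : Euc d → Euc d) (X : ℝ → Euc d → Euc d) (τ : ℝ → Euc d → Mat d)
    (t : ℝ) (a : Euc d) : Euc d :=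
  opL u₀ t (X t a) + opU (fun s y => τ s (invX X s y)) t (X t a)

/-- The Lagrangian velocity gradient `g = 𝕃(∇u₀)∘X + 𝔾(τ∘X⁻¹)∘X`. -/
def lagG {d : ℕ} (u₀ : Euc d → Euc d) (X : ℝ → Euc d → Euc d) (τ : ℝ → Euc d → Mat d)
    (t : ℝ) (a : Euc d) : Mat d :=
  opL (gradMat u₀) t (X t a) + opG (fun s y => τ s (invX X s y)) t (X t a)

/-- The Lagrangian nonlinearity `𝒯(X,τ) = F(g,τ)`. -/
def calT {d : ℕ} (F : Mat d → Mat d → Mat d) (u₀ : Euc d → Euc d) (X : ℝ → Euc d → Euc d)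
    (τ : ℝ → Euc d → Mat d) (t : ℝ) (a : Euc d) : Mat d :=
  F (lagG u₀ X τ t a) (τ t a)

/-- `v ⊗ v`. -/
def outer {d : ℕ} (w : Euc d) : Mat d := fun m n => w m * w n

/-- `𝕌(∇w)` for a time dependent matrix field `w`, assembled as a matrix. -/
def opUgrad {d : ℕ} (w : ℝ → Euc d → Mat d) (t : ℝ) (x : Euc d) : Mat d := fun m j =>
  opU (fun s y => fderiv ℝ (w s) y (Pi.single j 1)) t x m

/-- The Navier–Stokes Lagrangian nonlinearity
`𝒱(X,τ,v) = 𝕃(u₀)∘X + 𝕌(τ∘X⁻¹)∘X − 𝕌((v⊗v)∘X⁻¹)∘X`. -/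
def calV {d : ℕ} (u₀ : Euc d → Euc d) (X : ℝ → Euc d → Euc d) (τ : ℝ → Euc d → Mat d)
    (v : ℝ → Euc d → Euc d) (t : ℝ) (a : Euc d) : Euc d :=
  calU u₀ X τ t a - opU (fun s y => outer (v s (invX X s y))) t (X t a)

/-- The Navier–Stokes Lagrangian velocity gradient
`g = 𝕃(∇u₀)∘X + 𝔾(τ∘X⁻¹)∘X − 𝕌(∇((v⊗v)∘X⁻¹))∘X`. -/
def lagGns {d : ℕ} (u₀ : Euc d → Euc d) (X : ℝ → Euc d → Euc d) (τ : ℝ → Euc d → Mat d)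
    (v : ℝ → Euc d → Euc d) (t : ℝ) (a : Euc d) : Mat d :=
  lagG u₀ X τ t a - opUgrad (fun s y => outer (v s (invX X s y))) t (X t a)

/-- The Navier–Stokes Lagrangian nonlinearity `𝒯(X,τ,v) = F(g,τ)`. -/
def calTns {d : ℕ} (F : Mat d → Mat d → Mat d) (u₀ : Euc d → Euc d) (X : ℝ → Euc d → Euc d)
    (τ : ℝ → Euc d → Mat d) (v : ℝ → Euc d → Euc d) (t : ℝ) (a : Euc d) : Mat d :=
  F (lagGns u₀ X τ v t a) (τ t a)

/-- The space–time commutator `[η·∇, 𝔾](σ)`. -/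
def commG {d : ℕ} (η : ℝ → Euc d → Euc d) (σ : ℝ → Euc d → Mat d) (t : ℝ) (x : Euc d) :
    Mat d :=
  fderiv ℝ (opG σ t) x (η t x) - opG (fun s y => fderiv ℝ (σ s) y (η s y)) t x

/-- The space–time commutator `[η·∇, 𝕌](σ)`. -/
def commU {d : ℕ} (η : ℝ → Euc d → Euc d) (σ : ℝ → Euc d → Mat d) (t : ℝ) (x : Euc d) :
    Euc d :=
  fderiv ℝ (opU σ t) x (η t x) - opU (fun s y => fderiv ℝ (σ s) y (η s y)) t x

/-! Let `n = dim E`. If `g` is homogeneous of degree `-n`, then the measure `g dz` is invariant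
under dilations, so for `t > 1` the integral of `(w z - w (t z)) g z` is the same for every
compactly supported `w` equal to `1` near the origin, and equals an annular integral of `g`. For
`g = ∂ᵥ f` with `f` homogeneous of degree `1 - n`, a smooth `w` and integration by parts show that
it vanishes. Applied to `f = ℓ k` with `ℓ` linear, where `∂ᵥ f = ℓ(v) k + ℓ ∂ᵥ k`, this gives
`K = ℓ ∂ᵥ k` zero annular means as soon as `k` has them. Multiplying by a Lipschitz cutoff `χ`
perturbs `χ(0) K` by `O(|z|^(1 - n))` near the origin, so the truncated integrals of `χ K` stay
bounded. The Hölder estimate is then the classical one: split the integral at distance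
`2 |x - x'|`, bound the near part by size, and in the far part use the smoothness of the kernel
together with these truncated integrals. -/

open Module Metric
open scoped NNReal Pointwise

/-- `f` is positively homogeneous of degree `p` away from the origin; the value `f 0` is
unconstrained. -/
def IsPosHomogeneous {E F : Type*} [AddCommGroup E] [Module ℝ E] [AddCommGroup F] [Module ℝ F]
    (p : ℝ) (f : E → F) : Prop :=
  ∀ c : ℝ, 0 < c → ∀ x, x ≠ 0 → f (c • x) = c ^ p • f x

namespace IsPosHomogeneous

section Algebra

variable {E : Type*} [AddCommGroup E] [Module ℝ E] {p q : ℝ}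

theorem mul {f g : E → ℝ} (hf : IsPosHomogeneous p f) (hg : IsPosHomogeneous q g) :
    IsPosHomogeneous (p + q) fun x => f x * g x := fun c hc x hx => by
  simp only [hf c hc x hx, hg c hc x hx, rpow_add hc, smul_eq_mul]
  ring

theorem of_linearMap {F : Type*} [AddCommGroup F] [Module ℝ F] (ℓ : E →ₗ[ℝ] F) :
    IsPosHomogeneous 1 ℓ := fun c _ x _ => by
  rw [rpow_one, map_smul]

end Algebra

section Normed

variable {E F : Type*} [NormedAddCommGroup E] [NormedSpace ℝ E] [NormedAddCommGroup F]
  [NormedSpace ℝ F] {p : ℝ} {f : E → F}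

theorem norm_rpow (p : ℝ) : IsPosHomogeneous p fun x : E => ‖x‖ ^ p := fun c hc x _ => by
  dsimp only
  rw [norm_smul, norm_of_nonneg hc.le, mul_rpow hc.le (norm_nonneg x), smul_eq_mul]

protected theorem fderiv (hf : IsPosHomogeneous p f) : IsPosHomogeneous (p - 1) (fderiv ℝ f) := by
  intro c hc x hx
  have h : (fun y => f (c • y)) =ᶠ[𝓝 x] c ^ p • f := by
    filter_upwards [isOpen_ne.mem_nhds hx] with y hy using hf c hc y hy
  have hderiv : c • fderiv ℝ f (c • x) = c ^ p • fderiv ℝ f x := by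
    rw [← fderiv_comp_smul, h.fderiv_eq, fderiv_const_smul_field, Pi.smul_apply]
  rw [rpow_sub_one hc.ne', div_eq_inv_mul, mul_smul, ← hderiv, inv_smul_smul₀ hc.ne']

theorem fderiv_apply (hf : IsPosHomogeneous p f) (v : E) :
    IsPosHomogeneous (p - 1) fun x => fderiv ℝ f x v := fun c hc x hx => by
  simp only [hf.fderiv c hc x hx, smul_apply]

theorem exists_norm_le [FiniteDimensional ℝ E] (hf : IsPosHomogeneous p f)
    (hcont : ContinuousOn f {0}ᶜ) : ∃ A : ℝ≥0, ∀ z, z ≠ 0 → ‖f z‖ ≤ A * ‖z‖ ^ p := by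
  obtain ⟨A, hA⟩ := (isCompact_sphere (0 : E) 1).exists_bound_of_continuousOn
    (hcont.mono fun x hx => ne_zero_of_mem_sphere one_ne_zero ⟨x, hx⟩)
  refine ⟨A.toNNReal, fun z hz => ?_⟩
  have hpos : 0 < ‖z‖ := norm_pos_iff.2 hz
  have hunit : ‖z‖⁻¹ • z ∈ sphere (0 : E) 1 := by simp [norm_smul, hpos.ne']
  have hscale := hf ‖z‖ hpos _ (smul_ne_zero (inv_ne_zero hpos.ne') hz)
  rw [smul_inv_smul₀ hpos.ne'] at hscale
  rw [hscale, norm_smul, norm_of_nonneg (rpow_nonneg hpos.le p), mul_comm]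
  gcongr
  exact (hA _ hunit).trans (le_coe_toNNReal A)

theorem exists_norm_sub_le [FiniteDimensional ℝ E] (hf : IsPosHomogeneous p f) (hp : p ≤ 1)
    (hdiff : ContDiffOn ℝ 1 f {0}ᶜ) :
    ∃ B : ℝ≥0, ∀ w z, z ≠ 0 → 2 * ‖w - z‖ ≤ ‖z‖ → ‖f w - f z‖ ≤ B * ‖w - z‖ * ‖z‖ ^ (p - 1) := by
  have hopen : IsOpen ({0}ᶜ : Set E) := isOpen_compl_singleton
  obtain ⟨A, hA⟩ := hf.fderiv.exists_norm_le (hdiff.continuousOn_fderiv_of_isOpen hopen le_rfl)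
  refine ⟨A * (1 / 2) ^ (p - 1), fun w z hz hwz => ?_⟩
  have hpos : 0 < ‖z‖ := norm_pos_iff.2 hz
  have hball : ∀ y ∈ closedBall z (‖z‖ / 2), 1 / 2 * ‖z‖ ≤ ‖y‖ := fun y hy => by
    rw [mem_closedBall_iff_norm'] at hy
    linarith [norm_sub_norm_le z y]
  have hne : ∀ y ∈ closedBall z (‖z‖ / 2), y ≠ 0 := fun y hy =>
    norm_pos_iff.1 (lt_of_lt_of_le (by positivity) (hball y hy))
  have hbound : ∀ y ∈ closedBall z (‖z‖ / 2),
      ‖fderiv ℝ f y‖ ≤ A * (1 / 2) ^ (p - 1) * ‖z‖ ^ (p - 1) := fun y hy =>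
    calc ‖fderiv ℝ f y‖ ≤ A * ‖y‖ ^ (p - 1) := hA y (hne y hy)
      _ ≤ A * (1 / 2 * ‖z‖) ^ (p - 1) := by
        gcongr ?_ * ?_
        exact rpow_le_rpow_of_nonpos (by positivity) (hball y hy) (by linarith)
      _ = A * (1 / 2) ^ (p - 1) * ‖z‖ ^ (p - 1) := by
        rw [mul_rpow (by norm_num) hpos.le, mul_assoc]
  have hw : w ∈ closedBall z (‖z‖ / 2) := by rw [mem_closedBall_iff_norm]; linarith
  have hmean := (convex_closedBall z (‖z‖ / 2)).norm_image_sub_le_of_norm_fderiv_le (𝕜 := ℝ)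
    (fun y hy => (hdiff.contDiffAt (hopen.mem_nhds (hne y hy))).differentiableAt one_ne_zero)
    hbound (mem_closedBall_self (by positivity)) hw
  simpa [mul_right_comm] using hmean

end Normed

section Scaling

variable {E F : Type*} [NormedAddCommGroup E] [NormedSpace ℝ E] [FiniteDimensional ℝ E]
  [MeasurableSpace E] [BorelSpace E] (μ : Measure E) [μ.IsAddHaarMeasure]
  [Nontrivial E] [NormedAddCommGroup F] [NormedSpace ℝ F] {p : ℝ} {f : E → F}

theorem setIntegral_smul_set (hf : IsPosHomogeneous p f) {t : ℝ} (ht : 0 < t)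
    (s : Set E) : ∫ z in t • s, f z ∂μ = t ^ (finrank ℝ E + p) • ∫ z in s, f z ∂μ := by
  have hscale : ∫ z in s, f (t • z) ∂μ = t ^ p • ∫ z in s, f z ∂μ := by
    rw [← integral_smul]
    refine integral_congr_ae (ae_restrict_of_ae ?_)
    filter_upwards [Measure.ae_ne μ 0] with z hz using hf t ht z hz
  rw [Measure.setIntegral_comp_smul_of_pos μ f s ht, inv_smul_eq_iff₀ (by positivity)] at hscale
  rw [hscale, smul_smul, rpow_add ht, rpow_natCast]

theorem integral_comp_smul_smul (hf : IsPosHomogeneous p f) {t : ℝ} (ht : 0 < t)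
    (u : E → ℝ) :
    ∫ z, u (t • z) • f z ∂μ = t ^ (-(finrank ℝ E + p)) • ∫ z, u z • f z ∂μ := by
  have hscale : ∫ z, u (t • z) • f (t • z) ∂μ = t ^ p • ∫ z, u (t • z) • f z ∂μ := by
    rw [← integral_smul]
    refine integral_congr_ae ?_
    filter_upwards [Measure.ae_ne μ 0] with z hz
    rw [hf t ht z hz, smul_comm]
  rw [Measure.integral_comp_smul_of_nonneg μ (fun z => u z • f z) t (hR := ht.le)] at hscale
  rw [neg_add', rpow_sub ht, rpow_neg ht.le, rpow_natCast, div_eq_inv_mul, mul_smul, hscale,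
    inv_smul_smul₀ (rpow_pos_of_pos ht p).ne']

theorem integrable_comp_smul_smul (hf : IsPosHomogeneous p f) {t : ℝ} (ht : 0 < t) {u : E → ℝ}
    (hu : Integrable (fun z => u z • f z) μ) : Integrable (fun z => u (t • z) • f z) μ := by
  refine ((hu.comp_smul ht.ne').smul (t ^ (-p))).congr ?_
  filter_upwards [Measure.ae_ne μ 0] with z hz
  rw [Pi.smul_apply, hf t ht z hz, smul_comm, rpow_neg ht.le,
    inv_smul_smul₀ (rpow_pos_of_pos ht p).ne']

end Scaling

end IsPosHomogeneous

section RadialPowers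

variable {E : Type*} [NormedAddCommGroup E] [NormedSpace ℝ E] [FiniteDimensional ℝ E]
  [MeasurableSpace E] [BorelSpace E] (μ : Measure E) [μ.IsAddHaarMeasure]

theorem integrableOn_norm_rpow_closedBall [Nontrivial E] {p : ℝ} (hp : -(finrank ℝ E : ℝ) < p)
    (r : ℝ) : IntegrableOn (fun z : E => ‖z‖ ^ p) (closedBall 0 r) μ := by
  refine (locallyIntegrable_of_norm_le_rpow (C := 1) (α := -p) finrank_pos (by linarith)
    (Eventually.of_forall fun z => ?_)
    (measurable_norm.pow_const p).aestronglyMeasurable).integrableOn_isCompact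
      (isCompact_closedBall 0 r)
  rw [neg_neg, one_mul, norm_of_nonneg (by positivity)]

theorem integrableOn_norm_rpow_compl_closedBall {p : ℝ} (hp : p < -(finrank ℝ E : ℝ)) {r : ℝ}
    (hr : 0 < r) : IntegrableOn (fun z : E => ‖z‖ ^ p) (closedBall 0 r)ᶜ μ := by
  have hp0 : p ≤ 0 := hp.le.trans (by simp)
  have hjapanese : Integrable (fun z : E => (1 + ‖z‖) ^ p) μ := by
    simpa using integrable_one_add_norm (μ := μ) (r := -p) (by linarith)
  refine Integrable.mono' (hjapanese.const_mul ((r / (r + 1)) ^ p)).integrableOn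
    (measurable_norm.pow_const p).aestronglyMeasurable ?_
  filter_upwards [ae_restrict_mem measurableSet_closedBall.compl] with z hz
  have hz : r < ‖z‖ := by simpa using hz
  rw [norm_of_nonneg (by positivity), ← mul_rpow (by positivity) (by positivity)]
  refine rpow_le_rpow_of_nonpos (by positivity) ?_ hp0
  rw [div_mul_eq_mul_div, div_le_iff₀ (by positivity)]
  linarith

variable [Nontrivial E]

theorem setIntegral_norm_rpow_closedBall (p : ℝ) {r : ℝ} (hr : 0 < r) :
    ∫ z in closedBall (0 : E) r, ‖z‖ ^ p ∂μ =
      r ^ (finrank ℝ E + p) * ∫ z in closedBall (0 : E) 1, ‖z‖ ^ p ∂μ := by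
  rw [← smul_unitClosedBall_of_nonneg hr.le,
    (IsPosHomogeneous.norm_rpow p).setIntegral_smul_set μ hr, smul_eq_mul]

theorem setIntegral_norm_rpow_compl_closedBall (p : ℝ) {r : ℝ} (hr : 0 < r) :
    ∫ z in (closedBall (0 : E) r)ᶜ, ‖z‖ ^ p ∂μ =
      r ^ (finrank ℝ E + p) * ∫ z in (closedBall (0 : E) 1)ᶜ, ‖z‖ ^ p ∂μ := by
  have hdilate : (closedBall (0 : E) r)ᶜ = r • (closedBall 0 1)ᶜ := by
    rw [compl_eq_univ_sdiff, compl_eq_univ_sdiff, smul_set_sdiff₀ hr.ne', smul_set_univ₀ hr.ne',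
      smul_unitClosedBall_of_nonneg hr.le]
  rw [hdilate, (IsPosHomogeneous.norm_rpow p).setIntegral_smul_set μ hr, smul_eq_mul]

end RadialPowers

section CutoffDilation

variable {E : Type*} [NormedAddCommGroup E] [NormedSpace ℝ E]

theorem indicator_closedBall_sub_comp_smul {r₁ r₂ : ℝ} (h₁ : 0 < r₁) (h₂ : r₁ ≤ r₂) (z : E) :
    (closedBall 0 r₂).indicator 1 z - (closedBall 0 r₂).indicator 1 ((r₂ / r₁) • z) =
      {z : E | ‖z‖ ∈ Ioc r₁ r₂}.indicator (1 : E → ℝ) z := by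
  have hr₂ : 0 < r₂ := h₁.trans_le h₂
  have hdilate : (r₂ / r₁) • z ∈ closedBall 0 r₂ ↔ ‖z‖ ≤ r₁ := by
    rw [mem_closedBall_zero_iff, norm_smul, norm_of_nonneg (by positivity), div_mul_eq_mul_div,
      div_le_iff₀ h₁, mul_le_mul_iff_right₀ hr₂]
  by_cases hz : ‖z‖ ≤ r₁
  · simp [indicator, hdilate, hz, hz.trans h₂, hz.not_gt]
  · simp [indicator, hdilate, hz, not_le.1 hz]

theorem sub_comp_smul_eventuallyEq_zero {w : E → ℝ} (hw : w =ᶠ[𝓝 0] 1) (t : ℝ) :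
    (fun z => w z - w (t • z)) =ᶠ[𝓝 0] 0 := by
  have hdilate : Tendsto (fun z : E => t • z) (𝓝 0) (𝓝 0) := by
    simpa using (continuous_const_smul t).tendsto (0 : E)
  filter_upwards [hw, hdilate.eventually hw] with z hz htz
  simp [hz, htz]

theorem fderiv_sub_comp_smul_apply {w : E → ℝ} (hw : Differentiable ℝ w) (t : ℝ) (z v : E) :
    fderiv ℝ (fun z => w z - w (t • z)) z v = fderiv ℝ w z v - t * fderiv ℝ w (t • z) v := by
  have hwt : Differentiable ℝ fun z => w (t • z) := hw.comp (differentiable_id.const_smul t)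
  rw [fderiv_fun_sub (hw z) (hwt z), fderiv_comp_smul]
  rfl

end CutoffDilation

section AnnularMean

variable {E : Type*} [NormedAddCommGroup E] [MeasurableSpace E] {μ : Measure E}

/-- `k` has zero mean on every closed annulus centered at the origin, for the norm of `E`. This is
the integrated form of the zero mean condition on spheres, stated without surface measures. -/
def HasZeroAnnularMean (μ : Measure E) (k : E → ℝ) : Prop :=
  ∀ r₁ r₂ : ℝ, 0 < r₁ → r₁ ≤ r₂ → ∫ z in {z | ‖z‖ ∈ Icc r₁ r₂}, k z ∂μ = 0

variable [BorelSpace E]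

section Cutoff

variable [IsFiniteMeasureOnCompacts μ] {u f : E → ℝ}

theorem integrable_mul_of_bounded {C : ℝ} (hu : AEStronglyMeasurable u μ)
    (hbound : ∀ z, ‖u z‖ ≤ C) (hsupp : HasCompactSupport u) (hzero : u =ᶠ[𝓝 0] 0)
    (hf : ContinuousOn f {0}ᶜ) : Integrable (fun z => u z * f z) μ := by
  have hsubset : Function.support (fun z => u z * f z) ⊆ tsupport u :=
    (Function.support_mul_subset_left u f).trans (subset_tsupport u)
  have hcont : ContinuousOn f (tsupport u) := hf.mono fun z hz =>
    ne_of_mem_of_not_mem hz (notMem_tsupport_iff_eventuallyEq.2 hzero)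
  rw [← integrableOn_iff_integrable_of_support_subset hsubset]
  exact (hcont.integrableOn_compact hsupp).bdd_mul hu.restrict (ae_of_all _ hbound)

theorem integrable_mul_of_continuous (hu : Continuous u) (hsupp : HasCompactSupport u)
    (hzero : u =ᶠ[𝓝 0] 0) (hf : ContinuousOn f {0}ᶜ) : Integrable (fun z => u z * f z) μ :=
  have ⟨_, hbound⟩ := hsupp.exists_bound_of_continuous hu
  integrable_mul_of_bounded hu.aestronglyMeasurable hbound hsupp hzero hf

theorem integrable_fderiv_apply_mul [NormedSpace ℝ E] {w : E → ℝ}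
    (hf : ContinuousOn f {0}ᶜ) (hw : ContDiff ℝ 1 w) (hw_supp : HasCompactSupport w)
    (hw_one : w =ᶠ[𝓝 0] 1) (v : E) :
    Integrable (fun z => fderiv ℝ w z v * f z) μ := by
  have hw' : Continuous fun z => fderiv ℝ w z v :=
    (hw.continuous_fderiv one_ne_zero).clm_apply continuous_const
  have hw'_zero : (fun z => fderiv ℝ w z v) =ᶠ[𝓝 0] 0 := by
    filter_upwards [hw_one.fderiv (𝕜 := ℝ)] with z hz
    simp [hz, Pi.one_def]
  exact integrable_mul_of_continuous hw' (hw_supp.fderiv_apply (𝕜 := ℝ) v) hw'_zero hf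

end Cutoff

variable [NormedSpace ℝ E] [FiniteDimensional ℝ E] [μ.IsAddHaarMeasure]

theorem integrableOn_norm_Icc {f : E → ℝ} (hf : ContinuousOn f {0}ᶜ) {r₁ : ℝ} (h₁ : 0 < r₁)
    (r₂ : ℝ) : IntegrableOn f {z | ‖z‖ ∈ Icc r₁ r₂} μ := by
  have hcompact : IsCompact {z : E | ‖z‖ ∈ Icc r₁ r₂} :=
    (isCompact_closedBall (0 : E) r₂).of_isClosed_subset (isClosed_Icc.preimage continuous_norm)
      fun z hz => mem_closedBall_zero_iff.2 hz.2
  exact (hf.mono fun z hz => norm_pos_iff.1 (h₁.trans_le hz.1)).integrableOn_compact hcompact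

theorem integrableOn_norm_Ioc {f : E → ℝ} (hf : ContinuousOn f {0}ᶜ) {r₁ : ℝ} (h₁ : 0 < r₁)
    (r₂ : ℝ) : IntegrableOn f {z | ‖z‖ ∈ Ioc r₁ r₂} μ :=
  (integrableOn_norm_Icc hf h₁ r₂).mono_set fun _ hz => ⟨hz.1.le, hz.2⟩

variable [Nontrivial E]

theorem setIntegral_norm_Icc_eq_Ioc (f : E → ℝ) (r₁ r₂ : ℝ) :
    ∫ z in {z | ‖z‖ ∈ Icc r₁ r₂}, f z ∂μ = ∫ z in {z | ‖z‖ ∈ Ioc r₁ r₂}, f z ∂μ := by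
  refine setIntegral_congr_set ?_
  have hsphere : ∀ᵐ z ∂μ, z ∉ sphere (0 : E) r₁ :=
    measure_eq_zero_iff_ae_notMem.1 (Measure.addHaar_sphere μ 0 r₁)
  filter_upwards [hsphere] with z hz
  rw [mem_sphere_zero_iff_norm] at hz
  exact propext ⟨fun h => ⟨lt_of_le_of_ne h.1 (Ne.symm hz), h.2⟩, fun h => ⟨h.1.le, h.2⟩⟩

theorem integrable_sub_comp_smul_mul {g u : E → ℝ} {p : ℝ} (hg : IsPosHomogeneous p g)
    (hu : Integrable (fun z => u z * g z) μ) {t : ℝ} (ht : 0 < t) :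
    Integrable (fun z => (u z - u (t • z)) * g z) μ := by
  simp only [sub_mul]
  exact hu.sub (hg.integrable_comp_smul_smul μ ht hu)

theorem integral_sub_comp_smul_mul_eq_zero {g u : E → ℝ}
    (hg : IsPosHomogeneous (-(finrank ℝ E : ℝ)) g) (hu : Integrable (fun z => u z * g z) μ) {t : ℝ}
    (ht : 0 < t) : ∫ z, (u z - u (t • z)) * g z ∂μ = 0 := by
  have hscale : ∫ z, u (t • z) * g z ∂μ = ∫ z, u z * g z ∂μ := by
    simpa using hg.integral_comp_smul_smul μ ht u
  have hut : Integrable (fun z => u (t • z) * g z) μ := hg.integrable_comp_smul_smul μ ht hu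
  simp only [sub_mul]
  rw [integral_sub hu hut, hscale, sub_self]

-- The measure `g dμ` is dilation invariant, so the left side does not change if `w` is replaced
-- by the indicator function of `closedBall 0 r₂`.
theorem integral_sub_comp_smul_mul_eq_setIntegral {g w : E → ℝ}
    (hg : IsPosHomogeneous (-(finrank ℝ E : ℝ)) g) (hgc : ContinuousOn g {0}ᶜ)
    (hw : Continuous w) (hw_supp : HasCompactSupport w) (hw_one : w =ᶠ[𝓝 0] 1) {r₁ r₂ : ℝ}
    (h₁ : 0 < r₁) (h₂ : r₁ ≤ r₂) :
    ∫ z, (w z - w ((r₂ / r₁) • z)) * g z ∂μ = ∫ z in {z | ‖z‖ ∈ Ioc r₁ r₂}, g z ∂μ := by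
  have ht : 0 < r₂ / r₁ := div_pos (h₁.trans_le h₂) h₁
  set u : E → ℝ := fun z => (closedBall 0 r₂).indicator 1 z - w z with hu_def
  have hu_int : Integrable (fun z => u z * g z) μ := by
    obtain ⟨C, hC⟩ := hw_supp.exists_bound_of_continuous hw
    refine integrable_mul_of_bounded (C := 1 + C)
      ((aestronglyMeasurable_one.indicator measurableSet_closedBall).sub hw.aestronglyMeasurable)
      (fun z => (norm_sub_le _ _).trans
        (add_le_add ((norm_indicator_le_norm_self _ _).trans (by simp)) (hC z)))
      ((HasCompactSupport.intro (isCompact_closedBall 0 r₂)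
        fun z hz => indicator_of_notMem hz _).sub hw_supp) ?_ hgc
    filter_upwards [hw_one, closedBall_mem_nhds (0 : E) (h₁.trans_le h₂)] with z hwz hz
    simp [hu_def, hwz, indicator_of_mem hz]
  have hannulus : MeasurableSet {z : E | ‖z‖ ∈ Ioc r₁ r₂} := measurable_norm measurableSet_Ioc
  have hdecomp : ∀ z, (w z - w ((r₂ / r₁) • z)) * g z =
      {z | ‖z‖ ∈ Ioc r₁ r₂}.indicator g z - (u z - u ((r₂ / r₁) • z)) * g z := fun z => by
    have hindicator := indicator_mul_left {z : E | ‖z‖ ∈ Ioc r₁ r₂} (fun _ => (1 : ℝ)) g (i := z)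
    simp only [one_mul] at hindicator
    rw [hindicator, ← Pi.one_def, ← indicator_closedBall_sub_comp_smul h₁ h₂, hu_def]
    ring
  simp_rw [hdecomp]
  rw [integral_sub ((integrableOn_norm_Ioc hgc h₁ r₂).integrable_indicator hannulus)
    (integrable_sub_comp_smul_mul hg hu_int ht), integral_sub_comp_smul_mul_eq_zero hg hu_int ht,
    sub_zero, integral_indicator hannulus]

theorem integrable_fderiv_sub_comp_smul_mul {f w : E → ℝ} {p : ℝ} (hf : IsPosHomogeneous p f)
    (hw : Differentiable ℝ w) {v : E} (hw'f : Integrable (fun z => fderiv ℝ w z v * f z) μ) {t : ℝ}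
    (ht : 0 < t) : Integrable (fun z => fderiv ℝ (fun z => w z - w (t • z)) z v * f z) μ := by
  simp_rw [fderiv_sub_comp_smul_apply hw, sub_mul, mul_assoc]
  exact hw'f.sub ((hf.integrable_comp_smul_smul μ ht hw'f).const_mul t)

theorem integral_fderiv_sub_comp_smul_mul_eq_zero {f w : E → ℝ}
    (hf : IsPosHomogeneous (1 - finrank ℝ E : ℝ) f) (hw : Differentiable ℝ w) {v : E}
    (hw'f : Integrable (fun z => fderiv ℝ w z v * f z) μ) {t : ℝ} (ht : 0 < t) :
    ∫ z, fderiv ℝ (fun z => w z - w (t • z)) z v * f z ∂μ = 0 := by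
  have hscale : ∫ z, fderiv ℝ w (t • z) v * f z ∂μ = t⁻¹ * ∫ z, fderiv ℝ w z v * f z ∂μ := by
    simpa [rpow_neg_one] using hf.integral_comp_smul_smul μ ht fun z => fderiv ℝ w z v
  have hw'ft : Integrable (fun z => fderiv ℝ w (t • z) v * f z) μ :=
    hf.integrable_comp_smul_smul μ ht hw'f
  simp_rw [fderiv_sub_comp_smul_apply hw, sub_mul, mul_assoc]
  rw [integral_sub hw'f (hw'ft.const_mul t), integral_const_mul, hscale,
    mul_inv_cancel_left₀ ht.ne', sub_self]

-- After integrating by parts, the two terms are exchanged by the dilation `z ↦ t • z`.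
theorem integral_sub_comp_smul_mul_fderiv_eq_zero {f w : E → ℝ}
    (hf : IsPosHomogeneous (1 - finrank ℝ E : ℝ) f) (hfd : ContDiffOn ℝ 1 f {0}ᶜ)
    (hw : ContDiff ℝ 1 w) (hw_supp : HasCompactSupport w) (hw_one : w =ᶠ[𝓝 0] 1) (v : E) {t : ℝ}
    (ht : 0 < t) :
    ∫ z, (w z - w (t • z)) * fderiv ℝ f z v ∂μ = 0 := by
  have hopen : IsOpen ({0}ᶜ : Set E) := isOpen_compl_singleton
  have hf' : ContinuousOn (fun z => fderiv ℝ f z v) {0}ᶜ :=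
    (hfd.continuousOn_fderiv_of_isOpen hopen le_rfl).clm_apply continuousOn_const
  set u : E → ℝ := fun z => w z - w (t • z)
  have hu : ContDiff ℝ 1 u := hw.sub (hw.comp (contDiff_const_smul t))
  have hu_supp : HasCompactSupport u := hw_supp.sub (hw_supp.comp_smul ht.ne')
  have hu_zero : u =ᶠ[𝓝 0] 0 := sub_comp_smul_eventuallyEq_zero hw_one t
  have hw_diff : Differentiable ℝ w := hw.differentiable one_ne_zero
  have hw'f := integrable_fderiv_apply_mul (μ := μ) hfd.continuousOn hw hw_supp hw_one v
  rw [integral_mul_fderiv_eq_neg_fderiv_mul_of_integrable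
    (integrable_fderiv_sub_comp_smul_mul hf hw_diff hw'f ht)
    (integrable_mul_of_continuous hu.continuous hu_supp hu_zero hf')
    (integrable_mul_of_continuous hu.continuous hu_supp hu_zero hfd.continuousOn)
    (fun z _ => hu.differentiable one_ne_zero z) fun z hz => ?_,
    integral_fderiv_sub_comp_smul_mul_eq_zero hf hw_diff hw'f ht, neg_zero]
  exact (hfd.contDiffAt (hopen.mem_nhds (ne_of_mem_of_not_mem hz
    (notMem_tsupport_iff_eventuallyEq.2 hu_zero)))).differentiableAt one_ne_zero

theorem hasZeroAnnularMean_fderiv_apply {f : E → ℝ}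
    (hf : IsPosHomogeneous (1 - finrank ℝ E : ℝ) f) (hfd : ContDiffOn ℝ 1 f {0}ᶜ) (v : E) :
    HasZeroAnnularMean μ fun z => fderiv ℝ f z v := by
  intro r₁ r₂ h₁ h₂
  obtain ⟨w⟩ : Nonempty (ContDiffBump (0 : E)) := inferInstance
  rw [setIntegral_norm_Icc_eq_Ioc, ← integral_sub_comp_smul_mul_eq_setIntegral
    (by simpa using hf.fderiv_apply v)
    ((hfd.continuousOn_fderiv_of_isOpen isOpen_compl_singleton le_rfl).clm_apply
      continuousOn_const) w.continuous w.hasCompactSupport w.eventuallyEq_one h₁ h₂]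
  exact integral_sub_comp_smul_mul_fderiv_eq_zero hf hfd w.contDiff w.hasCompactSupport
    w.eventuallyEq_one v (div_pos (h₁.trans_le h₂) h₁)

theorem hasZeroAnnularMean_mul_fderiv_apply {k : E → ℝ}
    (hk : IsPosHomogeneous (-(finrank ℝ E : ℝ)) k) (hkd : ContDiffOn ℝ 1 k {0}ᶜ)
    (hk_mean : HasZeroAnnularMean μ k) (ℓ : E →L[ℝ] ℝ) (v : E) :
    HasZeroAnnularMean μ fun z => ℓ z * fderiv ℝ k z v := by
  intro r₁ r₂ h₁ h₂
  have hopen : IsOpen ({0}ᶜ : Set E) := isOpen_compl_singleton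
  have hℓk : IsPosHomogeneous (1 - finrank ℝ E : ℝ) fun z => ℓ z * k z :=
    (IsPosHomogeneous.of_linearMap ℓ.toLinearMap).mul hk
  have hproduct := hasZeroAnnularMean_fderiv_apply (μ := μ) hℓk (ℓ.contDiff.contDiffOn.mul hkd) v
    r₁ r₂ h₁ h₂
  have hleibniz : ∀ z ≠ 0, fderiv ℝ (fun z => ℓ z * k z) z v =
      ℓ z * fderiv ℝ k z v + ℓ v * k z := fun z hz => by
    rw [fderiv_fun_mul ℓ.differentiableAt
      ((hkd.contDiffAt (hopen.mem_nhds hz)).differentiableAt one_ne_zero)]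
    simp [mul_comm]
  have hannulus : MeasurableSet {z : E | ‖z‖ ∈ Icc r₁ r₂} := measurable_norm measurableSet_Icc
  have hℓk' : ContinuousOn (fun z => fderiv ℝ (fun z => ℓ z * k z) z v) {0}ᶜ :=
    ((ℓ.contDiff.contDiffOn.mul hkd).continuousOn_fderiv_of_isOpen hopen le_rfl).clm_apply
      continuousOn_const
  calc ∫ z in {z | ‖z‖ ∈ Icc r₁ r₂}, ℓ z * fderiv ℝ k z v ∂μ
      = ∫ z in {z | ‖z‖ ∈ Icc r₁ r₂}, (fderiv ℝ (fun z => ℓ z * k z) z v - ℓ v * k z) ∂μ :=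
        setIntegral_congr_fun hannulus fun z hz =>
          (sub_eq_of_eq_add (hleibniz z (norm_pos_iff.1 (h₁.trans_le hz.1)))).symm
    _ = 0 := by
      rw [integral_sub (integrableOn_norm_Icc hℓk' h₁ r₂)
        ((integrableOn_norm_Icc hkd.continuousOn h₁ r₂).const_mul (ℓ v)), hproduct,
        integral_const_mul, hk_mean r₁ r₂ h₁ h₂, mul_zero, sub_zero]

end AnnularMean

section Reflection

variable {E F : Type*} [NormedAddCommGroup E]

theorem sub_left_preimage_closedBall_zero (x : E) (r : ℝ) :
    (fun y => x - y) ⁻¹' closedBall 0 r = closedBall x r := by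
  ext y
  rw [mem_preimage, mem_closedBall_zero_iff, mem_closedBall', dist_eq_norm_sub]

variable [MeasurableSpace E] [BorelSpace E] (μ : Measure E) [μ.IsAddLeftInvariant]
  [μ.IsNegInvariant]

theorem setIntegral_comp_sub_left [NormedAddCommGroup F] [NormedSpace ℝ F] (f : E → F) (x : E)
    (s : Set E) : ∫ y in (fun y => x - y) ⁻¹' s, f (x - y) ∂μ = ∫ z in s, f z ∂μ :=
  (Measure.measurePreserving_sub_left μ x).setIntegral_preimage_emb
    (MeasurableEquiv.subLeft x).measurableEmbedding f s

theorem integrableOn_comp_sub_left [NormedAddCommGroup F] {f : E → F} {s : Set E}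
    (hf : IntegrableOn f s μ) (x : E) :
    IntegrableOn (fun y => f (x - y)) ((fun y => x - y) ⁻¹' s) μ :=
  ((Measure.measurePreserving_sub_left μ x).integrableOn_comp_preimage
    (MeasurableEquiv.subLeft x).measurableEmbedding).2 hf

end Reflection

theorem holderWith_of_norm_sub_le {E F : Type*} [SeminormedAddCommGroup E]
    [SeminormedAddCommGroup F] {M α : ℝ≥0} {σ : E → F}
    (hσ : ∀ x y, ‖σ x - σ y‖ ≤ M * ‖x - y‖ ^ (α : ℝ)) : HolderWith M α σ := fun x y => by
  rw [edist_nndist, edist_nndist, ← ENNReal.coe_rpow_of_nonneg _ α.coe_nonneg]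
  simp only [← dist_eq_norm_sub] at hσ
  exact_mod_cast hσ x y

section SingularKernel

variable {E : Type*} [NormedAddCommGroup E] [NormedSpace ℝ E] [MeasurableSpace E]

/-- A truncated singular kernel of Calderón–Zygmund type on `E`: it has compact support, it is of
size `A * ‖z‖ ^ (-n)` with `n = finrank ℝ E`, its difference quotients are of size
`B * ‖z‖ ^ (-n - 1)`, and its integrals over the complements of balls centered at the origin are
bounded by `D`. -/
structure IsSingularKernel (μ : Measure E) (A B D : ℝ≥0) (L : E → ℝ) : Prop where
  aestronglyMeasurable : AEStronglyMeasurable L μ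
  hasCompactSupport : HasCompactSupport L
  norm_le : ∀ z, z ≠ 0 → ‖L z‖ ≤ A * ‖z‖ ^ (-(finrank ℝ E : ℝ))
  norm_sub_le : ∀ w z, z ≠ 0 → 2 * ‖w - z‖ ≤ ‖z‖ →
    ‖L w - L z‖ ≤ B * ‖w - z‖ * ‖z‖ ^ (-(finrank ℝ E : ℝ) - 1)
  norm_setIntegral_compl_closedBall_le : ∀ r, 0 < r → ‖∫ z in (closedBall 0 r)ᶜ, L z ∂μ‖ ≤ D

variable {F : Type*} [NormedAddCommGroup F] [NormedSpace ℝ F]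

/-- The singular integral `∫ L (x - y) (σ y - σ x) dy` in which the difference `σ y - σ x`
compensates for the singularity of `L` at the origin. -/
def differenceIntegral (μ : Measure E) (L : E → ℝ) (σ : E → F) (x : E) : F :=
  ∫ y, L (x - y) • (σ y - σ x) ∂μ

namespace IsSingularKernel

variable {μ : Measure E} {A B D α M : ℝ≥0} {L : E → ℝ} {σ : E → F}

theorem norm_smul_sub_le (hL : IsSingularKernel μ A B D L) (hσ : HolderWith M α σ) (x y : E) :
    ‖L (x - y) • (σ y - σ x)‖ ≤ A * M * ‖x - y‖ ^ (α - finrank ℝ E : ℝ) := by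
  rcases eq_or_ne x y with rfl | hxy
  · rw [sub_self (σ x), smul_zero, norm_zero]
    positivity
  have hσxy : ‖σ y - σ x‖ ≤ M * ‖x - y‖ ^ (α : ℝ) := by
    simpa only [dist_eq_norm_sub, norm_sub_rev y x] using hσ.dist_le y x
  calc ‖L (x - y) • (σ y - σ x)‖
      ≤ (A * ‖x - y‖ ^ (-(finrank ℝ E : ℝ))) * (M * ‖x - y‖ ^ (α : ℝ)) := by
        rw [norm_smul]
        gcongr
        exact hL.norm_le _ (sub_ne_zero.2 hxy)
    _ = A * M * ‖x - y‖ ^ (α - finrank ℝ E : ℝ) := by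
        rw [sub_eq_neg_add (α : ℝ), rpow_add (norm_sub_pos_iff.2 hxy)]
        ring

theorem norm_sub_smul_sub_le (hL : IsSingularKernel μ A B D L) (hσ : HolderWith M α σ)
    {x x' y : E} (hxy : x ≠ y) (hy : 2 * ‖x - x'‖ ≤ ‖x - y‖) :
    ‖(L (x - y) - L (x' - y)) • (σ y - σ x')‖ ≤
      2 ^ (α : ℝ) * B * M * ‖x - x'‖ * ‖x - y‖ ^ (α - 1 - finrank ℝ E : ℝ) := by
  have hL_sub : ‖L (x - y) - L (x' - y)‖ ≤
      B * ‖x - x'‖ * ‖x - y‖ ^ (-(finrank ℝ E : ℝ) - 1) := by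
    have hsub : ‖x' - y - (x - y)‖ = ‖x - x'‖ := by rw [sub_sub_sub_cancel_right, norm_sub_rev]
    rw [norm_sub_rev, ← hsub]
    exact hL.norm_sub_le _ _ (sub_ne_zero.2 hxy) (hsub.symm ▸ hy)
  have htriangle : ‖x' - y‖ ≤ 2 * ‖x - y‖ := by
    linarith [norm_sub_le_norm_sub_add_norm_sub x' x y, norm_sub_rev x' x, norm_nonneg (x - y)]
  rw [norm_sub_rev] at htriangle
  have hσ_sub : ‖σ y - σ x'‖ ≤ M * (2 ^ (α : ℝ) * ‖x - y‖ ^ (α : ℝ)) := by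
    rw [← mul_rpow zero_le_two (norm_nonneg _)]
    refine le_trans (by simpa only [dist_eq_norm_sub] using hσ.dist_le y x') ?_
    gcongr
  calc ‖(L (x - y) - L (x' - y)) • (σ y - σ x')‖
      ≤ B * ‖x - x'‖ * ‖x - y‖ ^ (-(finrank ℝ E : ℝ) - 1) *
          (M * (2 ^ (α : ℝ) * ‖x - y‖ ^ (α : ℝ))) := by
        rw [norm_smul]
        gcongr
    _ = 2 ^ (α : ℝ) * B * M * ‖x - x'‖ *
          (‖x - y‖ ^ (-(finrank ℝ E : ℝ) - 1) * ‖x - y‖ ^ (α : ℝ)) := by ring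
    _ = _ := by
        rw [← rpow_add (norm_sub_pos_iff.2 hxy)]
        ring_nf

variable [BorelSpace E] [μ.IsAddHaarMeasure]

theorem integrableOn_compl_closedBall (hL : IsSingularKernel μ A B D L) {r : ℝ} (hr : 0 < r) :
    IntegrableOn L (closedBall 0 r)ᶜ μ := by
  rw [IntegrableOn, ← integrableOn_iff_integrable_of_support_subset (subset_tsupport L)]
  refine Measure.integrableOn_of_bounded (M := A * r ^ (-(finrank ℝ E : ℝ)))
    ((Measure.restrict_apply_le _ _).trans_lt hL.hasCompactSupport.isCompact.measure_lt_top).ne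
    hL.aestronglyMeasurable.restrict (ae_restrict_of_ae ?_)
  filter_upwards [ae_restrict_mem measurableSet_closedBall.compl] with z hz
  have hz : r < ‖z‖ := by simpa using hz
  refine (hL.norm_le z (norm_pos_iff.1 (hr.trans hz))).trans ?_
  gcongr ?_ * ?_
  exact rpow_le_rpow_of_nonpos hr hz.le (by simp)

variable [FiniteDimensional ℝ E]

theorem aestronglyMeasurable_smul_sub (hL : IsSingularKernel μ A B D L) (hα : 0 < α)
    (hσ : HolderWith M α σ) (x : E) :
    AEStronglyMeasurable (fun y => L (x - y) • (σ y - σ x)) μ :=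
  (hL.aestronglyMeasurable.comp_quasiMeasurePreserving
    (Measure.measurePreserving_sub_left μ x).quasiMeasurePreserving).smul
    ((hσ.continuous hα).sub continuous_const).aestronglyMeasurable

theorem norm_setIntegral_smul_const_le [CompleteSpace F] (hL : IsSingularKernel μ A B D L)
    (x : E) {r : ℝ} (hr : 0 < r) (c : F) :
    ‖∫ y in (closedBall x r)ᶜ, L (x - y) • c ∂μ‖ ≤ D * ‖c‖ := by
  rw [integral_smul_const, ← sub_left_preimage_closedBall_zero, ← preimage_compl,
    setIntegral_comp_sub_left, norm_smul]
  gcongr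
  exact hL.norm_setIntegral_compl_closedBall_le r hr

variable [Nontrivial E]

theorem integrableOn_smul_sub (hL : IsSingularKernel μ A B D L) (hα : 0 < α)
    (hσ : HolderWith M α σ) (x : E) (r : ℝ) :
    IntegrableOn (fun y => L (x - y) • (σ y - σ x)) (closedBall x r) μ := by
  have hmajorant : IntegrableOn (fun y => A * M * ‖x - y‖ ^ (α - finrank ℝ E : ℝ))
      (closedBall x r) μ := by
    rw [← sub_left_preimage_closedBall_zero]
    exact (integrableOn_comp_sub_left μ
      (integrableOn_norm_rpow_closedBall μ (by simpa using hα) r) x).const_mul _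
  exact hmajorant.mono' (hL.aestronglyMeasurable_smul_sub hα hσ x).restrict
    (ae_of_all _ fun y => hL.norm_smul_sub_le hσ x y)

theorem integrable_smul_sub (hL : IsSingularKernel μ A B D L) (hα : 0 < α)
    (hσ : HolderWith M α σ) (x : E) : Integrable (fun y => L (x - y) • (σ y - σ x)) μ := by
  obtain ⟨R, -, hR⟩ := hL.hasCompactSupport.exists_pos_le_norm
  rw [← integrableOn_iff_integrable_of_support_subset (s := closedBall x R)]
  · exact hL.integrableOn_smul_sub hα hσ x R
  refine Function.support_subset_iff'.2 fun y hy => ?_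
  rw [mem_closedBall', dist_eq_norm_sub, not_le] at hy
  rw [hR _ hy.le, zero_smul]

theorem norm_setIntegral_smul_sub_le (hL : IsSingularKernel μ A B D L) (hα : 0 < α)
    (hσ : HolderWith M α σ) {x : E} {r : ℝ} (hr : 0 < r) {s : Set E} (hs : s ⊆ closedBall x r) :
    ‖∫ y in s, L (x - y) • (σ y - σ x) ∂μ‖ ≤
      A * M * r ^ (α : ℝ) * ∫ z in closedBall (0 : E) 1, ‖z‖ ^ (α - finrank ℝ E : ℝ) ∂μ := by
  set m : E → ℝ := fun z => A * M * ‖z‖ ^ (α - finrank ℝ E : ℝ)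
  have hm : IntegrableOn (fun y => m (x - y)) (closedBall x r) μ := by
    rw [← sub_left_preimage_closedBall_zero]
    exact integrableOn_comp_sub_left μ
      ((integrableOn_norm_rpow_closedBall μ (by simpa using hα) r).const_mul _) x
  calc ‖∫ y in s, L (x - y) • (σ y - σ x) ∂μ‖
      ≤ ∫ y in s, m (x - y) ∂μ :=
        norm_integral_le_of_norm_le (hm.mono_set hs)
          (ae_of_all _ fun y => hL.norm_smul_sub_le hσ x y)
    _ ≤ ∫ y in closedBall x r, m (x - y) ∂μ :=
        setIntegral_mono_set hm (ae_of_all _ fun y => by positivity) hs.eventuallyLE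
    _ = ∫ z in closedBall (0 : E) r, m z ∂μ := by
        rw [← sub_left_preimage_closedBall_zero, setIntegral_comp_sub_left]
    _ = _ := by
        rw [integral_const_mul, setIntegral_norm_rpow_closedBall μ _ hr, add_sub_cancel]
        ring

theorem norm_setIntegral_sub_smul_sub_le (hL : IsSingularKernel μ A B D L) (hα : α < 1)
    (hσ : HolderWith M α σ) {x x' : E} (hx : x ≠ x') :
    ‖∫ y in (closedBall x (2 * ‖x - x'‖))ᶜ, (L (x - y) - L (x' - y)) • (σ y - σ x') ∂μ‖ ≤
      2 ^ (2 * α - 1 : ℝ) * B * M * ‖x - x'‖ ^ (α : ℝ) *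
        ∫ z in (closedBall (0 : E) 1)ᶜ, ‖z‖ ^ (α - 1 - finrank ℝ E : ℝ) ∂μ := by
  set h : ℝ := ‖x - x'‖
  have hpos : 0 < h := norm_sub_pos_iff.2 hx
  set m : E → ℝ := fun z => 2 ^ (α : ℝ) * B * M * h * ‖z‖ ^ (α - 1 - finrank ℝ E : ℝ)
  have hexp : (α - 1 - finrank ℝ E : ℝ) < -finrank ℝ E := by
    have : (α : ℝ) < 1 := mod_cast hα
    linarith
  have hfar : (closedBall x (2 * h))ᶜ = (fun y => x - y) ⁻¹' (closedBall 0 (2 * h))ᶜ := by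
    rw [preimage_compl, sub_left_preimage_closedBall_zero]
  have hm : IntegrableOn (fun y => m (x - y)) (closedBall x (2 * h))ᶜ μ := by
    rw [hfar]
    exact integrableOn_comp_sub_left μ
      ((integrableOn_norm_rpow_compl_closedBall μ hexp (by positivity)).const_mul _) x
  calc ‖∫ y in (closedBall x (2 * h))ᶜ, (L (x - y) - L (x' - y)) • (σ y - σ x') ∂μ‖
      ≤ ∫ y in (closedBall x (2 * h))ᶜ, m (x - y) ∂μ := by
        refine norm_integral_le_of_norm_le hm ?_
        filter_upwards [ae_restrict_mem measurableSet_closedBall.compl] with y hy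
        have hy : 2 * h < ‖x - y‖ := by simpa [dist_eq_norm_sub'] using hy
        exact hL.norm_sub_smul_sub_le hσ (norm_sub_pos_iff.1 (by linarith)) hy.le
    _ = ∫ z in (closedBall (0 : E) (2 * h))ᶜ, m z ∂μ := by
        rw [hfar, setIntegral_comp_sub_left]
    _ = _ := by
        rw [integral_const_mul, setIntegral_norm_rpow_compl_closedBall μ _ (by positivity),
          add_sub_cancel, mul_rpow zero_le_two hpos.le, rpow_sub_one hpos.ne',
          two_mul (α : ℝ), add_sub_assoc, rpow_add two_pos]
        field_simp

theorem differenceIntegral_sub_eq (hL : IsSingularKernel μ A B D L) (hα : 0 < α)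
    (hσ : HolderWith M α σ) (x x' : E) {r : ℝ} (hr : 0 < r) :
    differenceIntegral μ L σ x - differenceIntegral μ L σ x' =
      (∫ y in closedBall x r, L (x - y) • (σ y - σ x) ∂μ) -
        (∫ y in closedBall x r, L (x' - y) • (σ y - σ x') ∂μ) +
      ((∫ y in (closedBall x r)ᶜ, (L (x - y) - L (x' - y)) • (σ y - σ x') ∂μ) -
        ∫ y in (closedBall x r)ᶜ, L (x - y) • (σ x - σ x') ∂μ) := by
  have hx := hL.integrable_smul_sub hα hσ x
  have hx' := hL.integrable_smul_sub hα hσ x'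
  have hconst : IntegrableOn (fun y => L (x - y) • (σ x - σ x')) (closedBall x r)ᶜ μ := by
    rw [← sub_left_preimage_closedBall_zero, ← preimage_compl]
    exact (integrableOn_comp_sub_left μ (hL.integrableOn_compl_closedBall hr) x).smul_const _
  have hsub : IntegrableOn (fun y => L (x - y) • (σ y - σ x) - L (x' - y) • (σ y - σ x'))
      (closedBall x r)ᶜ μ := (hx.sub hx').integrableOn
  have hregroup : ∀ y, (L (x - y) - L (x' - y)) • (σ y - σ x') =
      L (x - y) • (σ y - σ x) - L (x' - y) • (σ y - σ x') + L (x - y) • (σ x - σ x') :=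
    fun y => by module
  simp_rw [hregroup]
  rw [integral_add hsub hconst, add_sub_cancel_right,
    integral_sub hx.integrableOn hx'.integrableOn, differenceIntegral, differenceIntegral,
    ← integral_add_compl measurableSet_closedBall hx,
    ← integral_add_compl measurableSet_closedBall hx']
  abel

theorem norm_differenceIntegral_sub_le [CompleteSpace F] (hL : IsSingularKernel μ A B D L)
    (hα₀ : 0 < α) (hα₁ : α < 1) (hσ : HolderWith M α σ) (x x' : E) :
    ‖differenceIntegral μ L σ x - differenceIntegral μ L σ x'‖ ≤
      ((2 ^ (α : ℝ) + 3 ^ (α : ℝ)) * A *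
          (∫ z in closedBall (0 : E) 1, ‖z‖ ^ (α - finrank ℝ E : ℝ) ∂μ) +
        2 ^ (2 * α - 1 : ℝ) * B *
          (∫ z in (closedBall (0 : E) 1)ᶜ, ‖z‖ ^ (α - 1 - finrank ℝ E : ℝ) ∂μ) + D) *
        M * ‖x - x'‖ ^ (α : ℝ) := by
  rcases eq_or_ne x x' with rfl | hx
  · rw [sub_self, norm_zero]
    positivity
  set h : ℝ := ‖x - x'‖ with hh
  have hpos : 0 < h := norm_sub_pos_iff.2 hx
  have hball : closedBall x (2 * h) ⊆ closedBall x' (3 * h) :=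
    closedBall_subset_closedBall' (by rw [dist_eq_norm_sub, ← hh]; linarith)
  have hnear := hL.norm_setIntegral_smul_sub_le hα₀ hσ (mul_pos two_pos hpos)
    (subset_refl (closedBall x (2 * h)))
  have hnear' := hL.norm_setIntegral_smul_sub_le hα₀ hσ (mul_pos three_pos hpos) hball
  rw [mul_rpow (by norm_num) hpos.le] at hnear hnear'
  have hfar := hL.norm_setIntegral_sub_smul_sub_le hα₁ hσ hx
  have hconst : ‖∫ y in (closedBall x (2 * h))ᶜ, L (x - y) • (σ x - σ x') ∂μ‖ ≤
      D * (M * h ^ (α : ℝ)) := by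
    refine (hL.norm_setIntegral_smul_const_le x (mul_pos two_pos hpos) _).trans ?_
    gcongr
    simpa only [dist_eq_norm_sub] using hσ.dist_le x x'
  rw [hL.differenceIntegral_sub_eq hα₀ hσ x x' (mul_pos two_pos hpos)]
  refine (norm_add_le_of_le (norm_sub_le_of_le hnear hnear')
    (norm_sub_le_of_le hfar hconst)).trans_eq ?_
  ring

theorem exists_holderWith_differenceIntegral [CompleteSpace F] (hL : IsSingularKernel μ A B D L)
    (hα₀ : 0 < α) (hα₁ : α < 1) :
    ∃ C : ℝ≥0, ∀ (M : ℝ≥0) (σ : E → F), HolderWith M α σ →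
      HolderWith (C * M) α (differenceIntegral μ L σ) := by
  refine ⟨((2 ^ (α : ℝ) + 3 ^ (α : ℝ)) * A *
      (∫ z in closedBall (0 : E) 1, ‖z‖ ^ (α - finrank ℝ E : ℝ) ∂μ) +
    2 ^ (2 * α - 1 : ℝ) * B *
      (∫ z in (closedBall (0 : E) 1)ᶜ, ‖z‖ ^ (α - 1 - finrank ℝ E : ℝ) ∂μ) + D).toNNReal,
    fun M σ hσ => holderWith_of_norm_sub_le fun x x' => ?_⟩
  rw [NNReal.coe_mul, coe_toNNReal _ (by positivity)]
  exact hL.norm_differenceIntegral_sub_le hα₀ hα₁ hσ x x'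

theorem exists_norm_differenceIntegral_le (hL : IsSingularKernel μ A B D L) (hα : 0 < α) :
    ∃ C : ℝ≥0, ∀ (M : ℝ≥0) (σ : E → F), HolderWith M α σ →
      ∀ x, ‖differenceIntegral μ L σ x‖ ≤ C * M := by
  obtain ⟨R, hR₀, hR⟩ := hL.hasCompactSupport.exists_pos_le_norm
  refine ⟨(A * R ^ (α : ℝ) * ∫ z in closedBall (0 : E) 1,
    ‖z‖ ^ (α - finrank ℝ E : ℝ) ∂μ).toNNReal, fun M σ hσ x => ?_⟩
  have hvanish : ∀ y ∉ closedBall x R, L (x - y) • (σ y - σ x) = 0 := fun y hy => by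
    rw [mem_closedBall', dist_eq_norm_sub, not_le] at hy
    rw [hR _ hy.le, zero_smul]
  rw [differenceIntegral, ← setIntegral_eq_integral_of_forall_compl_eq_zero hvanish]
  refine (hL.norm_setIntegral_smul_sub_le hα hσ hR₀ subset_rfl).trans_eq ?_
  rw [coe_toNNReal _ (by positivity)]
  ring

end IsSingularKernel

end SingularKernel

section CutoffKernel

variable {E : Type*} [NormedAddCommGroup E] [NormedSpace ℝ E] [FiniteDimensional ℝ E]
  {K χ : E → ℝ} {Λ : ℝ≥0}

theorem IsPosHomogeneous.exists_norm_sub_mul_le {p : ℝ} (hK : IsPosHomogeneous p K) (hp : p ≤ 0)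
    (hKc : ContinuousOn K {0}ᶜ) (hχ : LipschitzWith Λ χ) (hχ_supp : HasCompactSupport χ) :
    ∃ B : ℝ≥0, ∀ w z, z ≠ 0 → 2 * ‖w - z‖ ≤ ‖z‖ →
      ‖(χ w - χ z) * K w‖ ≤ B * ‖w - z‖ * ‖z‖ ^ (p - 1) := by
  obtain ⟨A, hA⟩ := hK.exists_norm_le hKc
  obtain ⟨R, hR₀, hR⟩ := hχ_supp.exists_pos_le_norm
  lift R to ℝ≥0 using hR₀.le
  refine ⟨Λ * (A * (1 / 2) ^ p * (2 * R)), fun w z hz hwz => ?_⟩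
  have hz₀ : 0 < ‖z‖ := norm_pos_iff.2 hz
  have hw : 1 / 2 * ‖z‖ ≤ ‖w‖ := by linarith [norm_sub_norm_le z w, norm_sub_rev z w]
  rcases le_or_gt (2 * (R : ℝ)) ‖z‖ with hzR | hzR
  · rw [hR w (by linarith), hR z (by linarith), sub_self, zero_mul, norm_zero]
    positivity
  have hKw : ‖K w‖ ≤ A * (1 / 2) ^ p * (2 * R) * ‖z‖ ^ (p - 1) := by
    calc ‖K w‖ ≤ A * ‖w‖ ^ p := hA w (norm_pos_iff.1 (by linarith))
      _ ≤ A * (1 / 2 * ‖z‖) ^ p := by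
        gcongr ?_ * ?_
        exact rpow_le_rpow_of_nonpos (by positivity) hw hp
      _ = A * (1 / 2) ^ p * ‖z‖ * ‖z‖ ^ (p - 1) := by
        rw [mul_rpow (by positivity) hz₀.le, rpow_sub_one hz₀.ne']
        field_simp
      _ ≤ A * (1 / 2) ^ p * (2 * R) * ‖z‖ ^ (p - 1) := by gcongr
  calc ‖(χ w - χ z) * K w‖
      ≤ Λ * ‖w - z‖ * (A * (1 / 2) ^ p * (2 * R) * ‖z‖ ^ (p - 1)) :=
        norm_mul_le_of_le (hχ.norm_sub_le w z) hKw
    _ = _ := by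
      push_cast
      ring

theorem IsPosHomogeneous.exists_norm_mul_sub_mul_le {p : ℝ} (hK : IsPosHomogeneous p K)
    (hp : p ≤ 0) (hKd : ContDiffOn ℝ 1 K {0}ᶜ) (hχ : LipschitzWith Λ χ)
    (hχ_supp : HasCompactSupport χ) :
    ∃ B : ℝ≥0, ∀ w z, z ≠ 0 → 2 * ‖w - z‖ ≤ ‖z‖ →
      ‖χ w * K w - χ z * K z‖ ≤ B * ‖w - z‖ * ‖z‖ ^ (p - 1) := by
  obtain ⟨B₁, hB₁⟩ := hK.exists_norm_sub_mul_le hp hKd.continuousOn hχ hχ_supp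
  obtain ⟨B₂, hB₂⟩ := hK.exists_norm_sub_le (hp.trans zero_le_one) hKd
  obtain ⟨C, hC⟩ := hχ_supp.exists_bound_of_continuous hχ.continuous
  lift C to ℝ≥0 using (norm_nonneg _).trans (hC 0)
  refine ⟨B₁ + C * B₂, fun w z hz hwz => ?_⟩
  calc ‖χ w * K w - χ z * K z‖ = ‖(χ w - χ z) * K w + χ z * (K w - K z)‖ := by ring_nf
    _ ≤ B₁ * ‖w - z‖ * ‖z‖ ^ (p - 1) + C * (B₂ * ‖w - z‖ * ‖z‖ ^ (p - 1)) :=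
      norm_add_le_of_le (hB₁ w z hz hwz) (norm_mul_le_of_le (hC z) (hB₂ w z hz hwz))
    _ = _ := by
      push_cast
      ring

variable [MeasurableSpace E] [BorelSpace E] [Nontrivial E] {μ : Measure E} [μ.IsAddHaarMeasure]

theorem HasZeroAnnularMean.setIntegral_norm_Ioc (hK : HasZeroAnnularMean μ K) {r₁ : ℝ}
    (h₁ : 0 < r₁) (r₂ : ℝ) : ∫ z in {z | ‖z‖ ∈ Ioc r₁ r₂}, K z ∂μ = 0 := by
  rcases le_or_gt r₁ r₂ with h | h
  · rw [← setIntegral_norm_Icc_eq_Ioc, hK r₁ r₂ h₁ h]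
  · simp [Ioc_eq_empty h.not_gt]

-- Since `K` has mean zero on the annulus, `χ` may be replaced there by `χ - χ 0`, which is
-- `O(‖z‖)` at the origin.
theorem norm_setIntegral_compl_closedBall_mul_le {A : ℝ≥0}
    (hA : ∀ z, z ≠ 0 → ‖K z‖ ≤ A * ‖z‖ ^ (-(finrank ℝ E : ℝ))) (hKc : ContinuousOn K {0}ᶜ)
    (hK_mean : HasZeroAnnularMean μ K) (hχ : LipschitzWith Λ χ) {R : ℝ}
    (hR : ∀ z, R ≤ ‖z‖ → χ z = 0) {r : ℝ} (hr : 0 < r) :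
    ‖∫ z in (closedBall 0 r)ᶜ, χ z * K z ∂μ‖ ≤
      Λ * A * ∫ z in closedBall (0 : E) R, ‖z‖ ^ (1 - finrank ℝ E : ℝ) ∂μ := by
  set S : Set E := {z | ‖z‖ ∈ Ioc r R}
  have hS_meas : MeasurableSet S := measurable_norm measurableSet_Ioc
  have hannulus : ∫ z in (closedBall 0 r)ᶜ, χ z * K z ∂μ = ∫ z in S, χ z * K z ∂μ := by
    refine setIntegral_eq_of_subset_of_forall_sdiff_eq_zero measurableSet_closedBall.compl
      (fun z hz => by simpa using hz.1) fun z hz => ?_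
    have hzR : R < ‖z‖ := not_le.1 fun h => hz.2 ⟨by simpa using hz.1, h⟩
    rw [hR z hzR.le, zero_mul]
  have hχK : IntegrableOn (fun z => χ z * K z) S μ :=
    integrableOn_norm_Ioc (hχ.continuous.continuousOn.mul hKc) hr R
  have hsub : ∫ z in S, χ z * K z ∂μ = ∫ z in S, (χ z - χ 0) * K z ∂μ := by
    simp_rw [sub_mul]
    rw [integral_sub hχK ((integrableOn_norm_Ioc hKc hr R).const_mul _), integral_const_mul,
      hK_mean.setIntegral_norm_Ioc hr, mul_zero, sub_zero]
  have hbound : ∀ z ∈ S, ‖(χ z - χ 0) * K z‖ ≤ Λ * A * ‖z‖ ^ (1 - finrank ℝ E : ℝ) := by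
    intro z hz
    have hz₀ : 0 < ‖z‖ := hr.trans hz.1
    calc ‖(χ z - χ 0) * K z‖ ≤ Λ * ‖z - 0‖ * (A * ‖z‖ ^ (-(finrank ℝ E : ℝ))) :=
          norm_mul_le_of_le (hχ.norm_sub_le z 0) (hA z (norm_pos_iff.1 hz₀))
      _ = _ := by
        rw [sub_zero, sub_eq_add_neg, rpow_add hz₀, rpow_one]
        ring
  have hmajorant : IntegrableOn (fun z : E => Λ * A * ‖z‖ ^ (1 - finrank ℝ E : ℝ))
      (closedBall 0 R) μ := (integrableOn_norm_rpow_closedBall μ (by linarith) R).const_mul _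
  have hS_subset : S ⊆ closedBall 0 R := fun z hz => mem_closedBall_zero_iff.2 hz.2
  rw [hannulus, hsub, ← integral_const_mul]
  exact (norm_integral_le_of_norm_le (hmajorant.mono_set hS_subset)
    ((ae_restrict_mem hS_meas).mono hbound)).trans
    (setIntegral_mono_set hmajorant (ae_of_all _ fun z => by positivity) hS_subset.eventuallyLE)

theorem exists_isSingularKernel_mul (hK : IsPosHomogeneous (-(finrank ℝ E : ℝ)) K)
    (hKd : ContDiffOn ℝ 1 K {0}ᶜ) (hK_mean : HasZeroAnnularMean μ K) (hχ : LipschitzWith Λ χ)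
    (hχ_supp : HasCompactSupport χ) :
    ∃ A B D : ℝ≥0, IsSingularKernel μ A B D fun z => χ z * K z := by
  obtain ⟨A, hA⟩ := hK.exists_norm_le hKd.continuousOn
  obtain ⟨B, hB⟩ := hK.exists_norm_mul_sub_mul_le (by simp) hKd hχ hχ_supp
  obtain ⟨C, hC⟩ := hχ_supp.exists_bound_of_continuous hχ.continuous
  lift C to ℝ≥0 using (norm_nonneg _).trans (hC 0)
  obtain ⟨R, -, hR⟩ := hχ_supp.exists_pos_le_norm
  have hK_meas : AEStronglyMeasurable K μ := by
    rw [← restrict_compl_singleton (μ := μ) 0]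
    exact hKd.continuousOn.aestronglyMeasurable (measurableSet_singleton 0).compl
  refine ⟨C * A, B, (Λ * A * ∫ z in closedBall (0 : E) R,
    ‖z‖ ^ (1 - finrank ℝ E : ℝ) ∂μ).toNNReal, ?_⟩
  exact
    { aestronglyMeasurable := hχ.continuous.aestronglyMeasurable.mul hK_meas
      hasCompactSupport := hχ_supp.mul_right
      norm_le := fun z hz => by
        simpa only [NNReal.coe_mul, mul_assoc] using norm_mul_le_of_le (hC z) (hA z hz)
      norm_sub_le := hB
      norm_setIntegral_compl_closedBall_le := fun r hr =>
        (norm_setIntegral_compl_closedBall_mul_le hA hKd.continuousOn hK_mean hχ hR hr).trans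
          (le_coe_toNNReal _) }

end CutoffKernel

theorem hasCompactSupport_comp_norm {E : Type*} [NormedAddCommGroup E] [ProperSpace E] {χ : ℝ → ℝ}
    (hχ : HasCompactSupport χ) : HasCompactSupport fun z : E => χ ‖z‖ := by
  obtain ⟨R, -, hR⟩ := hχ.exists_pos_le_norm
  refine .intro (isCompact_closedBall 0 R) fun z hz => hR _ ?_
  rw [norm_norm]
  exact (not_le.1 fun h => hz (mem_closedBall_zero_iff.2 h)).le

theorem inCa_iff_holderWith {d : ℕ} {F : Type*} [NormedAddCommGroup F] {α M : ℝ≥0}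
    {f : Euc d → F} : InCa α M f ↔ (∀ x, ‖f x‖ ≤ M) ∧ HolderWith M α f := by
  refine and_congr_right fun _ => ⟨holderWith_of_norm_sub_le, fun hf x y => ?_⟩
  simpa only [dist_eq_norm] using hf.dist_le x y

theorem stmt17_general {E F : Type*} [NormedAddCommGroup E] [NormedSpace ℝ E]
    [FiniteDimensional ℝ E] [Nontrivial E] [MeasurableSpace E] [BorelSpace E] {μ : Measure E}
    [μ.IsAddHaarMeasure] [NormedAddCommGroup F] [NormedSpace ℝ F] [CompleteSpace F] {α : ℝ≥0}
    (hα₀ : 0 < α) (hα₁ : α < 1) {k : E → ℝ} (hk : IsPosHomogeneous (-(finrank ℝ E : ℝ)) k)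
    (hkd : ContDiffOn ℝ 2 k {0}ᶜ) (hk_mean : HasZeroAnnularMean μ k) {χ : E → ℝ} {Λ : ℝ≥0}
    (hχ : LipschitzWith Λ χ) (hχ_supp : HasCompactSupport χ) (ℓ : E →L[ℝ] ℝ) (v : E) :
    ∃ C > (0 : ℝ≥0), ∀ (σ : E → F) (M : ℝ≥0), HolderWith M α σ →
      (∀ x, Integrable (fun y =>
        (χ (x - y) * (ℓ (x - y) * fderiv ℝ k (x - y) v)) • (σ y - σ x)) μ) ∧
      (∀ x, ‖∫ y, (χ (x - y) * (ℓ (x - y) * fderiv ℝ k (x - y) v)) • (σ y - σ x) ∂μ‖ ≤ C * M) ∧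
      HolderWith (C * M) α fun x =>
        ∫ y, (χ (x - y) * (ℓ (x - y) * fderiv ℝ k (x - y) v)) • (σ y - σ x) ∂μ := by
  have hK : IsPosHomogeneous (-(finrank ℝ E : ℝ)) fun z => ℓ z * fderiv ℝ k z v := by
    simpa using (IsPosHomogeneous.of_linearMap ℓ.toLinearMap).mul (hk.fderiv_apply v)
  have hKd : ContDiffOn ℝ 1 (fun z => ℓ z * fderiv ℝ k z v) {0}ᶜ :=
    ℓ.contDiff.contDiffOn.mul
      ((hkd.fderiv_of_isOpen isOpen_compl_singleton one_add_one_eq_two.le).clm_apply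
        contDiffOn_const)
  have hK_mean := hasZeroAnnularMean_mul_fderiv_apply hk (hkd.of_le one_le_two) hk_mean ℓ v
  obtain ⟨A, B, D, hL⟩ := exists_isSingularKernel_mul hK hKd hK_mean hχ hχ_supp
  obtain ⟨C₁, hC₁⟩ := hL.exists_norm_differenceIntegral_le (F := F) hα₀
  obtain ⟨C₂, hC₂⟩ := hL.exists_holderWith_differenceIntegral (F := F) hα₀ hα₁
  refine ⟨max C₁ C₂ + 1, by positivity, fun σ M hσ =>
    ⟨hL.integrable_smul_sub hα₀ hσ, fun x => (hC₁ M σ hσ x).trans ?_, (hC₂ M σ hσ).mono ?_⟩⟩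
  · gcongr
    exact (le_max_left _ _).trans (le_add_of_nonneg_right zero_le_one)
  · gcongr
    exact (le_max_right _ _).trans (le_add_of_nonneg_right zero_le_one)

/-- the estimate for `I(x)` in the proof of Lemma `steadycomm`: with
`K(z) = z_j ∂_i k(z)` and a smooth cutoff `χ`, the absolutely convergent integral
`I(x) = ∫ χ(|x−y|) K(x−y) (σ(y)−σ(x)) dy` defines a function whose `C^α` norm is bounded by
`C‖σ‖_{C^α}`. -/
theorem stmt17 (d : ℕ) (hd : 1 ≤ d) (α : ℝ) (hα0 : 0 < α) (hα1 : α < 1)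
    (k : Euc d → ℝ)
    (hk_smooth : ContDiffOn ℝ (⊤ : ℕ∞) k {x : Euc d | x ≠ 0})
    (hk_hom : ∀ c : ℝ, 0 < c → ∀ x : Euc d, x ≠ 0 → k (c • x) = c ^ (-(d : ℝ)) * k x)
    (hk_mean : ∀ r₁ r₂ : ℝ, 0 < r₁ → r₁ ≤ r₂ →
      (∫ z in {z : Euc d | r₁ ≤ ‖z‖ ∧ ‖z‖ ≤ r₂}, k z) = 0)
    (χ : ℝ → ℝ) (hχ_smooth : ContDiff ℝ (⊤ : ℕ∞) χ) (hχ_range : ∀ r, χ r ∈ Icc (0 : ℝ) 1)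
    (hχ_one : ∀ r ∈ Icc (0 : ℝ) 1, χ r = 1) (hχ_supp : HasCompactSupport χ)
    (i j : Fin d) :
    ∃ C > (0 : ℝ), ∀ (σ : Euc d → ℝ) (Mσ : ℝ), InCa α Mσ σ →
      (∀ x : Euc d, Integrable (fun y : Euc d =>
        χ ‖x - y‖ * ((x - y) j * fderiv ℝ k (x - y) (Pi.single i 1)) * (σ y - σ x))
        volume) ∧
      InCa α (C * Mσ)
        (fun x : Euc d => ∫ y : Euc d,
          χ ‖x - y‖ * ((x - y) j * fderiv ℝ k (x - y) (Pi.single i 1)) * (σ y - σ x)) := by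
  have : Nonempty (Fin d) := ⟨i⟩
  lift α to ℝ≥0 using hα0.le
  obtain ⟨Λ, hΛ⟩ := hχ_smooth.lipschitzWith_of_hasCompactSupport hχ_supp (by simp)
  have hk : IsPosHomogeneous (-(finrank ℝ (Euc d) : ℝ)) k := by
    simpa [IsPosHomogeneous] using hk_hom
  obtain ⟨C, hC_pos, hC⟩ := stmt17_general (F := ℝ) (μ := volume) (mod_cast hα0) (mod_cast hα1) hk
    (hk_smooth.of_le ENat.LEInfty.out) hk_mean (hΛ.comp lipschitzWith_one_norm)
    (hasCompactSupport_comp_norm hχ_supp) (.proj j) (Pi.single i 1)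
  refine ⟨C, mod_cast hC_pos, fun σ Mσ hσ => ?_⟩
  lift Mσ to ℝ≥0 using (norm_nonneg _).trans (hσ.1 0)
  obtain ⟨h_int, h_bound⟩ := hC σ Mσ (inCa_iff_holderWith.1 hσ).2
  exact ⟨h_int, mod_cast inCa_iff_holderWith.2 h_bound⟩

end
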